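/- (Proof step of Theorem 1: CCC-sum evaluation.) Under the construction setup, for every fixed 0 ≤ t_1 ≤ 2^s−1, all 0 ≤ i, j ≤ 2^{k+1}−1 and all shifts 0 ≤ τ ≤ 2^m, one has 2·Σ_{ν=0}^{2^{k+1}−1} γ(s^{(t_1,i)}_ν, s^{(t_1,j)}_ν)(τ) = 2^{m+k+2} if τ = 0 and i = j, and = 0 otherwise, where s^{(t_1,t_2)}_ν (0 ≤ ν ≤ 2^{k+1}−1) denote the sequences of S^{(t_1,t_2)} (indexed by (d,d_0,…,d_{k−1})). -/

import Mathlib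

/-- Aperiodic cross-correlation function (ACCF) of two complex sequences of length `L`,
for an integer shift `u` with `−L < u ≤ L`:
`γ(a,b)(u) = Σ_{i=0}^{L−1−u} a_i · conj(b_{i+u})` for `0 ≤ u`, and
`γ(a,b)(u) = Σ_{i=0}^{L+u−1} a_{i−u} · conj(b_i)` for `u < 0`. -/
noncomputable def accf (L : ℕ) (a b : ℕ → ℂ) (u : ℤ) : ℂ :=
  if 0 ≤ u then ∑ i ∈ Finset.range (L - u.toNat), a i * (starRingEnd ℂ) (b (i + u.toNat))
  else ∑ i ∈ Finset.range (L - (-u).toNat), a (i + (-u).toNat) * (starRingEnd ℂ) (b i)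

/-- ACCF for a nonnegative shift `u : ℕ`. -/
noncomputable def accfN (L : ℕ) (a b : ℕ → ℂ) (u : ℕ) : ℂ :=
  ∑ i ∈ Finset.range (L - u), a i * (starRingEnd ℂ) (b (i + u))

/-- Periodic cross-correlation function of two sequences of length `N`. -/
noncomputable def pccf (N : ℕ) (x y : ℕ → ℂ) (u : ℕ) : ℂ :=
  ∑ n ∈ Finset.range N, x n * (starRingEnd ℂ) (y ((n + u) % N))

/-- The `t`-th bit of `x`, as an element of `ZMod q`. -/
def bitc (q : ℕ) (x t : ℕ) : ZMod q := if x.testBit t then 1 else 0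

/-- The `t`-th bit of `x`, as a natural number. -/
def bitn (x t : ℕ) : ℕ := if x.testBit t then 1 else 0

/-- `ω = exp(2π√−1/q)`. -/
noncomputable def omegaQ (q : ℕ) : ℂ := Complex.exp (2 * Real.pi * Complex.I / (q : ℂ))

/-- The construction setup of Lemma 2/Theorem 1: integers `0 ≤ s ≤ k ≤ m−2`, an even
integer `q ≥ 2`, index sets `J = {j_0,…,j_{k−1−s}} ⊆ {0,…,m−s−1}` and
`I = {i_0,…,i_{m−k−1}} = {0,…,m−s−1} \ J`, a permutation `π` of `{0,…,m−k−1}`,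
and a GBF `f : {0,1}^m → ℤ_q` (written as a function of the index `x < 2^m`) all of whose
restrictions over the variables `x_{j_0},…,x_{j_{k−s−1}}` are of the prescribed
path-plus-isolated-vertices quadratic form. -/
structure ZCZSetup where
  /-- the (even) alphabet size -/
  q : ℕ
  hq : 2 ≤ q
  hqeven : Even q
  m : ℕ
  k : ℕ
  s : ℕ
  hsk : s ≤ k
  hkm : k + 2 ≤ m
  /-- `jv β = j_β` for `β < k − s` (the non-forced part of `J`) -/
  jv : ℕ → ℕ
  /-- `iv β = i_β` for `β < m − k` (an enumeration of `I`) -/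
  iv : ℕ → ℕ
  /-- the permutation `π` of `{0,…,m−k−1}` -/
  perm : ℕ → ℕ
  hperm : Set.BijOn perm (Set.Iio (m - k)) (Set.Iio (m - k))
  hjv_lt : ∀ β < k - s, jv β < m - s
  hjv_inj : ∀ β₁ < k - s, ∀ β₂ < k - s, jv β₁ = jv β₂ → β₁ = β₂
  hiv_lt : ∀ β < m - k, iv β < m - s
  hiv_inj : ∀ β₁ < m - k, ∀ β₂ < m - k, iv β₁ = iv β₂ → β₁ = β₂
  hdisj : ∀ β₁ < k - s, ∀ β₂ < m - k, jv β₁ ≠ iv β₂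
  /-- the GBF `f`, as a function of the index `x` (with `j`-th bit `x_j`) -/
  f : ℕ → ZMod q
  hf : ∀ e : ℕ → Bool, ∃ u : ℕ → ZMod q, ∃ v' : ℕ → ZMod q, ∃ v : ZMod q,
    ∀ x < 2 ^ m, (∀ β < k - s, x.testBit (jv β) = e β) →
      f x = ((q / 2 : ℕ) : ZMod q) * (∑ β ∈ Finset.range (m - k - 1),
              bitc q x (iv (perm β)) * bitc q x (iv (perm (β + 1))))
          + (∑ β ∈ Finset.range (m - k), u β * bitc q x (iv β))
          + (∑ β ∈ Finset.range s, v' β * bitc q x (m - s + β)) + v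

namespace ZCZSetup

variable (C : ZCZSetup)

/-- The full tuple `(j_0,…,j_{k−1})`: `j_β = jv β` for `β < k − s` and
`j_{k−s+β} = m − s + β` for `0 ≤ β < s`. -/
def jfull (β : ℕ) : ℕ :=
  if β < C.k - C.s then C.jv β else C.m - C.s + (β - (C.k - C.s))

/-- The bits `b_0,…,b_{k+s+1}`: `t_2 = Σ_{β=0}^{k} b_β 2^β` and
`t_1 = Σ_{β=0}^{s−1} b_{k+1+β} 2^β`. -/
def bbit (t1 t2 β : ℕ) : ℕ :=
  if β < C.k + 1 then bitn t2 β else bitn t1 (β - (C.k + 1))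

/-- `γ_1 = i_{π(0)}`, an end vertex of the path. -/
def gamma1 : ℕ := C.iv (C.perm 0)

/-- `γ_2 = i_{π(m−k−1)}`, the other end vertex of the path. -/
def gamma2 : ℕ := C.iv (C.perm (C.m - C.k - 1))

/-- The GBF (as a function of the index `x`) of the `ν`-th sequence of `S^{(t_1,t_2)}`,
where `ν = d·2^k + Σ_{β=0}^{k−1} d_β 2^β` encodes `(d, d_0,…,d_{k−1})`. -/
def gExp (t1 t2 ν x : ℕ) : ZMod C.q :=
  C.f x + ((C.q / 2 : ℕ) : ZMod C.q) *
    ((∑ β ∈ Finset.range C.k, bitc C.q ν β * bitc C.q x (C.jfull β))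
     + bitc C.q ν C.k * bitc C.q x C.gamma1
     + (∑ β ∈ Finset.range C.k, ((C.bbit t1 t2 β : ℕ) : ZMod C.q) * bitc C.q x (C.jfull β))
     + (∑ β ∈ Finset.Ico (C.k - C.s) C.k,
          bitc C.q ν β * ((C.bbit t1 t2 (C.s + 1 + β) : ℕ) : ZMod C.q))
     + ((C.bbit t1 t2 C.k : ℕ) : ZMod C.q) * bitc C.q x C.gamma2)

/-- The `ν`-th sequence `s^{(t_1,t_2)}_ν` of `S^{(t_1,t_2)}` (a complex sequence of
length `2^m`). -/
noncomputable def Sseq (t1 t2 ν : ℕ) : ℕ → ℂ :=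
  fun x => omegaQ C.q ^ (C.gExp t1 t2 ν x).val

end ZCZSetup

/-!
Since `ω ^ (q / 2) = -1`, a sum of values of `ω ^ φ` vanishes as soon as some involution of its
index set moves `φ` by `q / 2`; every cancellation comes from flipping one binary digit.

List the variables as `j_0, …, j_{k-1}` followed by the path `i_{π(0)}, …, i_{π(m-k-1)}`. Summing
over `ν` keeps only the pairs `(x, x + τ)` whose bits agree at the first `k + 1` variables of this
list. For `τ = 0` these are all pairs, and the sum over `x` is an orthogonality relation of Walsh
functions. For `τ ≠ 0`, let `w` be the variable just before the first one at which `x` and `x + τ`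
differ. It lies on the path, and flipping it in both numbers preserves their difference and
changes only one term of the difference of the quadratic forms, the edge from `w` to its
successor, hence moves the exponent by `q / 2`.
-/

theorem exists_lt_testBit_ne {n x y : ℕ} (hx : x < 2 ^ n) (hy : y < 2 ^ n) (hne : x ≠ y) :
    ∃ t < n, x.testBit t ≠ y.testBit t := by
  obtain ⟨t, ht⟩ := Nat.exists_testBit_ne_of_ne hne
  refine ⟨t, ?_, ht⟩
  by_contra! hnt
  have hpow : 2 ^ n ≤ 2 ^ t := Nat.pow_le_pow_right two_pos hnt
  exact ht <| by rw [Nat.testBit_eq_false_of_lt (hx.trans_le hpow),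
    Nat.testBit_eq_false_of_lt (hy.trans_le hpow)]

theorem xor_two_pow_eq_add {x p : ℕ} (h : x.testBit p = false) : x ^^^ 2 ^ p = x + 2 ^ p := by
  induction p generalizing x with
  | zero =>
    rw [pow_zero, Nat.xor_one_of_even]
    simpa [Nat.even_iff] using h
  | succ p ih =>
    have hdiv : (x ^^^ 2 ^ (p + 1)) / 2 = x / 2 + 2 ^ p := by
      rw [Nat.xor_div_two, pow_succ, Nat.mul_div_cancel _ two_pos, ih (by rwa [← Nat.testBit_succ])]
    have hmod : (x ^^^ 2 ^ (p + 1)) % 2 = x % 2 := by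
      rw [Nat.xor_mod_two_eq, pow_succ, Nat.add_mul_mod_self_right]
    omega

theorem xor_two_pow_add {x p τ : ℕ} (h : x.testBit p = (x + τ).testBit p) :
    (x ^^^ 2 ^ p) + τ = (x + τ) ^^^ 2 ^ p := by
  cases hx : x.testBit p with
  | false =>
    rw [xor_two_pow_eq_add hx, xor_two_pow_eq_add (h ▸ hx)]
    omega
  | true =>
    have add_two_pow {y : ℕ} (hy : y.testBit p = true) : (y ^^^ 2 ^ p) + 2 ^ p = y := by
      rw [← xor_two_pow_eq_add (by simp [Nat.testBit_two_pow_self, hy]), Nat.xor_xor_cancel_right]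
    have := add_two_pow hx
    have := add_two_pow (h ▸ hx)
    omega

theorem sum_eq_zero_of_xor_two_pow {M : Type*} [AddCommGroup M] {s : Finset ℕ}
    {F : ℕ → M} (p : ℕ → ℕ) (hs : ∀ x ∈ s, x ^^^ 2 ^ p x ∈ s)
    (hp : ∀ x ∈ s, p (x ^^^ 2 ^ p x) = p x) (hF : ∀ x ∈ s, F (x ^^^ 2 ^ p x) = -F x) :
    ∑ x ∈ s, F x = 0 :=
  Finset.sum_involution (fun x _ => x ^^^ 2 ^ p x)
    (fun x hx => by rw [hF x hx, add_neg_cancel])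
    (fun x _ _ heq => by simpa using congrArg (x ^^^ ·) heq)
    (fun x hx => hs x hx)
    (fun x hx => by rw [hp x hx, Nat.xor_xor_cancel_right])

theorem sum_mul_succ_sub_sum_mul_succ {R : Type*} [CommRing R] {l n w : ℕ} {a a' b b' : ℕ → R}
    (hlw : l ≤ w) (hwn : w < n) (ha : ∀ β ≤ n, β ≠ w → a' β = a β)
    (hb : ∀ β ≤ n, β ≠ w → b' β = b β) (hab : ∀ β ≤ w, a β = b β) (hw : a' w = b' w) :
    ∑ β ∈ Finset.Ico l n, a' β * a' (β + 1) - ∑ β ∈ Finset.Ico l n, b' β * b' (β + 1) =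
      ∑ β ∈ Finset.Ico l n, a β * a (β + 1) - ∑ β ∈ Finset.Ico l n, b β * b (β + 1) +
        (a' w - a w) * (a (w + 1) - b (w + 1)) := by
  have hab' : ∀ β ≤ w, a' β = b' β := fun β hβ => by
    rcases hβ.eq_or_lt with rfl | hlt
    · exact hw
    · rw [ha β (by omega) hlt.ne, hb β (by omega) hlt.ne, hab β hβ]
  -- The terms before `w` cancel between the two sequences, those after `w` within each of them.
  have hterm : ∀ β ∈ Finset.Ico l n, a' β * a' (β + 1) - b' β * b' (β + 1) -
      (a β * a (β + 1) - b β * b (β + 1)) =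
      if β = w then (a' w - a w) * (a (w + 1) - b (w + 1)) else 0 := by
    intro β hβ
    have hβn := (Finset.mem_Ico.1 hβ).2
    rcases lt_trichotomy β w with hlt | rfl | hgt
    · rw [hab' β hlt.le, hab' (β + 1) hlt, hab β hlt.le, hab (β + 1) hlt, if_neg hlt.ne]
      ring
    · rw [ha (β + 1) hβn (by omega), hb (β + 1) hβn (by omega), ← hw, ← hab β le_rfl, if_pos rfl]
      ring
    · rw [ha β hβn.le hgt.ne', ha (β + 1) hβn (by omega), hb β hβn.le hgt.ne',
        hb (β + 1) hβn (by omega), if_neg hgt.ne']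
      ring
  rw [← sub_eq_iff_eq_add', ← Finset.sum_sub_distrib, ← Finset.sum_sub_distrib,
    ← Finset.sum_sub_distrib, Finset.sum_congr rfl hterm, Finset.sum_ite_eq',
    if_pos (Finset.mem_Ico.2 ⟨hlw, hwn⟩)]

section Bits

variable {q : ℕ}

theorem bitc_congr {x y t : ℕ} (h : x.testBit t = y.testBit t) : bitc q x t = bitc q y t := by
  rw [bitc, bitc, h]

theorem bitc_xor_two_pow_self (x p : ℕ) : bitc q (x ^^^ 2 ^ p) p = 1 - bitc q x p := by
  cases h : x.testBit p <;> simp [bitc, h, Nat.testBit_two_pow_self]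

theorem bitc_xor_two_pow_of_ne {x p t : ℕ} (h : t ≠ p) :
    bitc q (x ^^^ 2 ^ p) t = bitc q x t := by
  simp [bitc, Nat.testBit_two_pow_of_ne h.symm]

/-- The values of `A` are affine in the bits of the argument: the effect of flipping a bit depends
on that bit only. Phrased through differences, so that no coefficients need to be named. -/
def IsBitAffine {M : Type*} [Sub M] (A : ℕ → M) : Prop :=
  ∀ ⦃x y p : ℕ⦄, x.testBit p = y.testBit p → A (x ^^^ 2 ^ p) - A (y ^^^ 2 ^ p) = A x - A y

theorem isBitAffine_const {M : Type*} [AddGroup M] (v : M) : IsBitAffine fun _ => v :=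
  fun _ _ _ _ => rfl

theorem IsBitAffine.add {M : Type*} [AddCommGroup M] {A B : ℕ → M} (hA : IsBitAffine A)
    (hB : IsBitAffine B) : IsBitAffine fun x => A x + B x := fun x y p h => by
  rw [add_sub_add_comm, hA h, hB h, add_sub_add_comm]

theorem isBitAffine_sum_mul_bitc (S : Finset ℕ) (c : ℕ → ZMod q) (v : ℕ → ℕ) :
    IsBitAffine fun x => ∑ β ∈ S, c β * bitc q x (v β) := by
  intro x y p h
  simp only [← Finset.sum_sub_distrib]
  refine Finset.sum_congr rfl fun β _ => ?_
  rcases eq_or_ne (v β) p with hβ | hβ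
  · rw [hβ, bitc_xor_two_pow_self, bitc_xor_two_pow_self, bitc_congr h]
    ring
  · rw [bitc_xor_two_pow_of_ne hβ, bitc_xor_two_pow_of_ne hβ]

/-- The bilinear form `∑ β < n, a_β * x_{v β}` in the bits of `a` and `x`; multiplied by `q / 2` it
is the exponent of a Walsh function. -/
def bitPairing (q n : ℕ) (v : ℕ → ℕ) (a x : ℕ) : ZMod q :=
  ∑ β ∈ Finset.range n, bitc q a β * bitc q x (v β)

theorem bitPairing_xor_two_pow_of_ne {n p : ℕ} {v : ℕ → ℕ} (hv : ∀ β < n, v β ≠ p) (a x : ℕ) :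
    bitPairing q n v a (x ^^^ 2 ^ p) = bitPairing q n v a x :=
  Finset.sum_congr rfl fun β hβ => by rw [bitc_xor_two_pow_of_ne (hv β (Finset.mem_range.1 hβ))]

/-- The residue of `q / 2`; for even `q` it is the exponent with `ω ^ (q / 2) = -1`. -/
def halfPeriod (q : ℕ) : ZMod q := ((q / 2 : ℕ) : ZMod q)

theorem two_mul_halfPeriod (hq : Even q) : 2 * halfPeriod q = 0 := by
  have h : ((2 * (q / 2) : ℕ) : ZMod q) = (q : ℕ) := by rw [Nat.two_mul_div_two_of_even hq]
  rwa [ZMod.natCast_self, Nat.cast_mul, Nat.cast_two] at h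

theorem halfPeriod_mul_bitc_sub_bitc (hq : Even q) {x y t t' : ℕ}
    (h : x.testBit t ≠ y.testBit t') :
    halfPeriod q * (bitc q x t - bitc q y t') = halfPeriod q := by
  cases hx : x.testBit t <;> cases hy : y.testBit t'
  · exact absurd (hx.trans hy.symm) h
  · simp only [bitc, hx, hy, Bool.false_eq_true, if_true, if_false]
    linear_combination -two_mul_halfPeriod hq
  · simp [bitc, hx, hy]
  · exact absurd (hx.trans hy.symm) h

variable [NeZero q]

theorem stdAddChar_halfPeriod (hq : Even q) : ZMod.stdAddChar (halfPeriod q) = -1 := by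
  have hq0 : (q : ℂ) ≠ 0 := Nat.cast_ne_zero.2 (NeZero.ne q)
  have hhalf : (2 : ℂ) * ((q / 2 : ℕ) : ℂ) = q := by
    exact_mod_cast Nat.two_mul_div_two_of_even hq
  have hexp := ZMod.stdAddChar_coe (N := q) ((q / 2 : ℕ) : ℤ)
  rw [halfPeriod, ← Int.cast_natCast, hexp, ← Complex.exp_pi_mul_I]
  congr 1
  rw [div_eq_iff hq0, ← hhalf, Int.cast_natCast]
  ring

theorem stdAddChar_eq_omegaQ_pow (a : ZMod q) : ZMod.stdAddChar a = omegaQ q ^ a.val := by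
  have h := ZMod.stdAddChar_coe (N := q) (a.val : ℤ)
  rw [Int.cast_natCast, ZMod.natCast_zmod_val] at h
  rw [omegaQ, h, ← Complex.exp_nat_mul]
  congr 1
  push_cast
  ring

theorem sum_stdAddChar_eq_zero_of_xor_two_pow (hq : Even q) {s : Finset ℕ} {φ : ℕ → ZMod q}
    (p : ℕ → ℕ) (hs : ∀ x ∈ s, x ^^^ 2 ^ p x ∈ s) (hp : ∀ x ∈ s, p (x ^^^ 2 ^ p x) = p x)
    (hφ : ∀ x ∈ s, φ (x ^^^ 2 ^ p x) = φ x + halfPeriod q) :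
    ∑ x ∈ s, ZMod.stdAddChar (φ x) = 0 :=
  sum_eq_zero_of_xor_two_pow p hs hp fun x hx => by
    rw [hφ x hx, AddChar.map_add_eq_mul, stdAddChar_halfPeriod hq, mul_neg_one]

theorem sum_stdAddChar_linearForm_eq_zero (hq : Even q) {N n b : ℕ} {c : ℕ → ZMod q} {v : ℕ → ℕ}
    (hv : Set.InjOn v (Set.Iio n)) (hbn : b < n) (hbN : v b < N)
    (hc : halfPeriod q * c b = halfPeriod q) :
    ∑ z ∈ Finset.range (2 ^ N),
      ZMod.stdAddChar (halfPeriod q * ∑ β ∈ Finset.range n, c β * bitc q z (v β)) = 0 := by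
  refine sum_stdAddChar_eq_zero_of_xor_two_pow hq (fun _ => v b) (fun z hz => ?_)
    (fun _ _ => rfl) fun z _ => ?_
  · exact Finset.mem_range.2 (Nat.xor_lt_two_pow (Finset.mem_range.1 hz)
      (Nat.pow_lt_pow_right one_lt_two hbN))
  · have hsum : ∑ β ∈ Finset.range n, c β * bitc q (z ^^^ 2 ^ v b) (v β) -
        ∑ β ∈ Finset.range n, c β * bitc q z (v β) = c b * (1 - 2 * bitc q z (v b)) := by
      rw [← Finset.sum_sub_distrib, Finset.sum_eq_single_of_mem b (Finset.mem_range.2 hbn)]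
      · rw [bitc_xor_two_pow_self]
        ring
      · intro β hβ hne
        rw [bitc_xor_two_pow_of_ne (hv.ne (Finset.mem_range.1 hβ) hbn hne), sub_self]
    linear_combination halfPeriod q * hsum + hc - c b * bitc q z (v b) * two_mul_halfPeriod hq

theorem sum_stdAddChar_bitPairing_sub_index (hq : Even q) (n : ℕ) (v : ℕ → ℕ) (x y : ℕ) :
    ∑ a ∈ Finset.range (2 ^ n),
      ZMod.stdAddChar (halfPeriod q * (bitPairing q n v a x - bitPairing q n v a y)) =
        if ∀ β < n, x.testBit (v β) = y.testBit (v β) then (2 : ℂ) ^ n else 0 := by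
  split_ifs with h
  · have heq (a : ℕ) : bitPairing q n v a x = bitPairing q n v a y :=
      Finset.sum_congr rfl fun β hβ => by rw [bitc_congr (h β (Finset.mem_range.1 hβ))]
    simp [heq]
  · push Not at h
    obtain ⟨b, hbn, hb⟩ := h
    rw [← sum_stdAddChar_linearForm_eq_zero hq (v := id)
      (c := fun β => bitc q x (v β) - bitc q y (v β)) (Set.injOn_id _) hbn hbn
      (halfPeriod_mul_bitc_sub_bitc hq hb)]
    simp only [bitPairing, ← Finset.sum_sub_distrib, ← mul_sub, id,
      mul_comm (bitc q _ _ - _)]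

theorem sum_stdAddChar_bitPairing_sub_position (hq : Even q) {N n : ℕ} {v : ℕ → ℕ}
    (hv : Set.InjOn v (Set.Iio n)) (hvN : ∀ β < n, v β < N) {i j : ℕ} (hi : i < 2 ^ n)
    (hj : j < 2 ^ n) :
    ∑ x ∈ Finset.range (2 ^ N),
      ZMod.stdAddChar (halfPeriod q * (bitPairing q n v i x - bitPairing q n v j x)) =
        if i = j then (2 : ℂ) ^ N else 0 := by
  split_ifs with hij
  · simp [hij]
  · obtain ⟨b, hbn, hb⟩ := exists_lt_testBit_ne hi hj hij
    rw [← sum_stdAddChar_linearForm_eq_zero hq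
      (c := fun β => bitc q i β - bitc q j β) hv hbn (hvN b hbn)
      (halfPeriod_mul_bitc_sub_bitc hq hb)]
    simp only [bitPairing, ← Finset.sum_sub_distrib, ← sub_mul]

end Bits

namespace ZCZSetup

variable (C : ZCZSetup)

instance : NeZero C.q := ⟨by have := C.hq; omega⟩

/-- The enumeration `j_0, …, j_{k-1}, i_{π(0)}, …, i_{π(m-k-1)}` of the variables: the restricted
ones, then the path in order. -/
def vertex (β : ℕ) : ℕ := if β < C.k then C.jfull β else C.iv (C.perm (β - C.k))

theorem vertex_of_lt {β : ℕ} (hβ : β < C.k) : C.vertex β = C.jfull β := if_pos hβ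

theorem vertex_add (β : ℕ) : C.vertex (C.k + β) = C.iv (C.perm β) := by
  rw [vertex, if_neg (by omega), Nat.add_sub_cancel_left]

theorem jfull_lt {β : ℕ} (hβ : β < C.k) : C.jfull β < C.m := by
  have := C.hsk
  have := C.hkm
  unfold jfull
  split_ifs with h
  · have := C.hjv_lt β h
    omega
  · omega

theorem jfull_injective : Function.Injective C.jfull := by
  intro β β' h
  have := C.hsk
  have := C.hkm
  unfold jfull at h
  split_ifs at h with hβ hβ' hβ'
  · exact C.hjv_inj _ hβ _ hβ' h
  · have := C.hjv_lt β hβ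
    omega
  · have := C.hjv_lt β' hβ'
    omega
  · omega

theorem perm_lt {β : ℕ} (hβ : β < C.m - C.k) : C.perm β < C.m - C.k := C.hperm.mapsTo hβ

theorem jfull_ne_iv {β β' : ℕ} (hβ' : β' < C.m - C.k) : C.jfull β ≠ C.iv β' := by
  have := C.hiv_lt _ hβ'
  unfold jfull
  split_ifs with hβ
  · exact C.hdisj _ hβ _ hβ'
  · omega

theorem vertex_lt {β : ℕ} (hβ : β < C.m) : C.vertex β < C.m := by
  unfold vertex
  split_ifs with h
  · exact C.jfull_lt h
  · have := C.hiv_lt _ (C.perm_lt (β := β - C.k) (by omega))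
    omega

theorem vertex_injOn : Set.InjOn C.vertex (Set.Iio C.m) := by
  intro β hβ β' hβ' h
  simp only [Set.mem_Iio] at hβ hβ'
  unfold vertex at h
  split_ifs at h with hβk hβk' hβk'
  · exact C.jfull_injective h
  · exact absurd h (C.jfull_ne_iv (C.perm_lt (by omega)))
  · exact absurd h.symm (C.jfull_ne_iv (C.perm_lt (by omega)))
  · have hperm := C.hiv_inj _ (C.perm_lt (by omega)) _ (C.perm_lt (by omega)) h
    have := C.hperm.injOn (Set.mem_Iio.2 (by omega)) (Set.mem_Iio.2 (by omega)) hperm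
    omega

theorem vertex_bijOn : Set.BijOn C.vertex (Set.Iio C.m) (Set.Iio C.m) :=
  ((Set.finite_Iio C.m).injOn_iff_bijOn_of_mapsTo fun _ => C.vertex_lt).1 C.vertex_injOn

theorem vertex_ne {β β' : ℕ} (hβ : β < C.m) (hβ' : β' < C.m) (hne : β ≠ β') :
    C.vertex β ≠ C.vertex β' :=
  C.vertex_injOn.ne hβ hβ' hne

/-- The variable multiplied by the bit `b_β` of `t_2`: `j_β` for `β < k`, and the last path vertex
`γ_2` for `β = k`. -/
def maskVertex (β : ℕ) : ℕ := C.vertex (if β < C.k then β else C.m - 1)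

theorem maskVertex_lt (β : ℕ) : C.maskVertex β < C.m := by
  have := C.hkm
  exact C.vertex_lt (by split_ifs <;> omega)

theorem maskVertex_injOn : Set.InjOn C.maskVertex (Set.Iio (C.k + 1)) := by
  intro β hβ β' hβ' h
  have := C.hkm
  simp only [Set.mem_Iio] at hβ hβ'
  have := C.vertex_injOn (Set.mem_Iio.2 (by split_ifs <;> omega))
    (Set.mem_Iio.2 (by split_ifs <;> omega)) h
  split_ifs at this <;> omega

theorem maskVertex_ne_vertex {w : ℕ} (hkw : C.k ≤ w) (hw : w + 1 < C.m) (β : ℕ) :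
    C.maskVertex β ≠ C.vertex w :=
  C.vertex_ne (by split_ifs <;> omega) (by omega) (by split_ifs <;> omega)

/-- The GBF `f + (q / 2) * (∑ b_β x_{j_β} + b_k x_{γ_2})`, the part of the exponent of
`s^{(t_1,t_2)}_ν` that does not involve `ν`. -/
def maskedGBF (t2 x : ℕ) : ZMod C.q :=
  C.f x + halfPeriod C.q * bitPairing C.q (C.k + 1) C.maskVertex t2 x

theorem bitPairing_vertex (ν x : ℕ) :
    bitPairing C.q (C.k + 1) C.vertex ν x =
      ∑ β ∈ Finset.range C.k, bitc C.q ν β * bitc C.q x (C.jfull β) +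
        bitc C.q ν C.k * bitc C.q x C.gamma1 := by
  rw [bitPairing, Finset.sum_range_succ, gamma1, ← C.vertex_add, add_zero]
  congr 1
  exact Finset.sum_congr rfl fun β hβ => by rw [C.vertex_of_lt (Finset.mem_range.1 hβ)]

theorem natCast_bbit {β : ℕ} (hβ : β < C.k + 1) (t1 t2 : ℕ) :
    ((C.bbit t1 t2 β : ℕ) : ZMod C.q) = bitc C.q t2 β := by
  simp [bbit, bitn, bitc, hβ]

theorem bitPairing_maskVertex (t1 t2 x : ℕ) :
    bitPairing C.q (C.k + 1) C.maskVertex t2 x =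
      ∑ β ∈ Finset.range C.k, ((C.bbit t1 t2 β : ℕ) : ZMod C.q) * bitc C.q x (C.jfull β) +
        ((C.bbit t1 t2 C.k : ℕ) : ZMod C.q) * bitc C.q x C.gamma2 := by
  have hlast : C.maskVertex C.k = C.gamma2 := by
    have := C.hkm
    rw [maskVertex, if_neg (lt_irrefl _), gamma2, ← C.vertex_add]
    congr 1
    omega
  rw [bitPairing, Finset.sum_range_succ, hlast, C.natCast_bbit (Nat.lt_succ_self _)]
  congr 1
  refine Finset.sum_congr rfl fun β hβ => ?_
  have hβk := Finset.mem_range.1 hβ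
  rw [C.natCast_bbit (by omega), maskVertex, if_pos hβk, C.vertex_of_lt hβk]

/-- The term `∑ d_β b_{s+1+β}` of the exponent, which involves neither the position nor `t_2`. -/
def offset (t1 ν : ℕ) : ZMod C.q :=
  ∑ β ∈ Finset.Ico (C.k - C.s) C.k, bitc C.q ν β * (bitn t1 (C.s + β - C.k) : ℕ)

theorem gExp_eq (t1 t2 ν x : ℕ) :
    C.gExp t1 t2 ν x = C.maskedGBF t2 x + halfPeriod C.q *
      (bitPairing C.q (C.k + 1) C.vertex ν x + C.offset t1 ν) := by
  have hoffset : ∑ β ∈ Finset.Ico (C.k - C.s) C.k,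
      bitc C.q ν β * ((C.bbit t1 t2 (C.s + 1 + β) : ℕ) : ZMod C.q) = C.offset t1 ν := by
    refine Finset.sum_congr rfl fun β hβ => ?_
    have := Finset.mem_Ico.1 hβ
    rw [bbit, if_neg (by omega), show C.s + 1 + β - (C.k + 1) = C.s + β - C.k by omega]
  rw [gExp, hoffset, maskedGBF, C.bitPairing_maskVertex t1, C.bitPairing_vertex, halfPeriod]
  ring

theorem Sseq_mul_conj_Sseq (t1 i j ν x y : ℕ) :
    C.Sseq t1 i ν x * (starRingEnd ℂ) (C.Sseq t1 j ν y) =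
      ZMod.stdAddChar (C.maskedGBF i x - C.maskedGBF j y) *
        ZMod.stdAddChar (halfPeriod C.q * (bitPairing C.q (C.k + 1) C.vertex ν x -
          bitPairing C.q (C.k + 1) C.vertex ν y)) := by
  rw [Sseq, Sseq, ← stdAddChar_eq_omegaQ_pow, ← stdAddChar_eq_omegaQ_pow,
    ← AddChar.map_neg_eq_conj, ← AddChar.map_add_eq_mul, ← AddChar.map_add_eq_mul, gExp_eq, gExp_eq]
  congr 1
  ring

/-- The positions `x` of a sequence of length `2 ^ m`, for the shift `τ`, such that the bits of `x`
and `x + τ` agree at `j_0, …, j_{k-1}` and at `γ_1`. -/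
def agreementSet (τ : ℕ) : Finset ℕ :=
  {x ∈ Finset.range (2 ^ C.m - τ) |
    ∀ β < C.k + 1, x.testBit (C.vertex β) = (x + τ).testBit (C.vertex β)}

theorem mem_agreementSet {τ x : ℕ} :
    x ∈ C.agreementSet τ ↔ x + τ < 2 ^ C.m ∧
      ∀ β < C.k + 1, x.testBit (C.vertex β) = (x + τ).testBit (C.vertex β) := by
  rw [agreementSet, Finset.mem_filter, Finset.mem_range, Nat.lt_sub_iff_add_lt]

theorem sum_accfN_Sseq (t1 i j τ : ℕ) :
    ∑ ν ∈ Finset.range (2 ^ (C.k + 1)), accfN (2 ^ C.m) (C.Sseq t1 i ν) (C.Sseq t1 j ν) τ =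
      2 ^ (C.k + 1) * ∑ x ∈ C.agreementSet τ,
        ZMod.stdAddChar (C.maskedGBF i x - C.maskedGBF j (x + τ)) := by
  simp only [accfN, Sseq_mul_conj_Sseq]
  rw [Finset.sum_comm]
  simp only [← Finset.mul_sum, sum_stdAddChar_bitPairing_sub_index C.hqeven, mul_ite, mul_zero]
  rw [← Finset.sum_filter, ← Finset.sum_mul, mul_comm, agreementSet]

theorem sum_agreementSet_zero {i j : ℕ} (hi : i < 2 ^ (C.k + 1)) (hj : j < 2 ^ (C.k + 1)) :
    ∑ x ∈ C.agreementSet 0, ZMod.stdAddChar (C.maskedGBF i x - C.maskedGBF j (x + 0)) =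
      if i = j then (2 : ℂ) ^ C.m else 0 := by
  have huniv : C.agreementSet 0 = Finset.range (2 ^ C.m) := by
    simp [agreementSet]
  rw [huniv, ← sum_stdAddChar_bitPairing_sub_position C.hqeven C.maskVertex_injOn
    (fun β _ => C.maskVertex_lt β) hi hj]
  simp only [maskedGBF, add_zero, add_sub_add_left_eq_sub, mul_sub]

/-- The quadratic form `∑ x_{i_{π(β)}} x_{i_{π(β+1)}}` of the path. -/
def pathForm (x : ℕ) : ZMod C.q :=
  ∑ β ∈ Finset.Ico C.k (C.m - 1), bitc C.q x (C.vertex β) * bitc C.q x (C.vertex (β + 1))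

theorem exists_isBitAffine_f_eq (x : ℕ) :
    ∃ A : ℕ → ZMod C.q, IsBitAffine A ∧ ∀ y < 2 ^ C.m,
      (∀ β < C.k, y.testBit (C.vertex β) = x.testBit (C.vertex β)) →
        C.f y = halfPeriod C.q * C.pathForm y + A y := by
  obtain ⟨u, v', v, hf⟩ := C.hf fun β => x.testBit (C.vertex β)
  refine ⟨_, ((isBitAffine_sum_mul_bitc (Finset.range (C.m - C.k)) u C.iv).add
    (isBitAffine_sum_mul_bitc (Finset.range C.s) v' fun β => C.m - C.s + β)).add
    (isBitAffine_const v), fun y hy hyx => ?_⟩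
  have hvertex : ∀ β < C.k - C.s, C.vertex β = C.jv β := fun β hβ => by
    rw [C.vertex_of_lt (by omega), jfull, if_pos hβ]
  have hpath : C.pathForm y = ∑ β ∈ Finset.range (C.m - C.k - 1),
      bitc C.q y (C.iv (C.perm β)) * bitc C.q y (C.iv (C.perm (β + 1))) := by
    rw [pathForm, Finset.sum_Ico_eq_sum_range, Nat.sub_right_comm]
    simp only [add_assoc, C.vertex_add]
  rw [hf y hy fun β hβ => by rw [← hvertex β hβ, hyx β (by omega)], hpath, halfPeriod]
  ring

section Flip

variable {x y w : ℕ}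

theorem testBit_vertex_xor_of_lt (hw : w < C.m) {β : ℕ} (hβ : β < w) (z : ℕ) :
    (z ^^^ 2 ^ C.vertex w).testBit (C.vertex β) = z.testBit (C.vertex β) := by
  simp [Nat.testBit_two_pow_of_ne (C.vertex_ne (hβ.trans hw) hw hβ.ne).symm]

theorem xor_two_pow_vertex_lt (hx : x < 2 ^ C.m) (hw : w < C.m) :
    x ^^^ 2 ^ C.vertex w < 2 ^ C.m :=
  Nat.xor_lt_two_pow hx (Nat.pow_lt_pow_right one_lt_two (C.vertex_lt hw))

theorem pathForm_xor_sub_pathForm_xor (hkw : C.k ≤ w) (hw : w + 1 < C.m)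
    (hagree : ∀ β ≤ w, x.testBit (C.vertex β) = y.testBit (C.vertex β)) :
    C.pathForm (x ^^^ 2 ^ C.vertex w) - C.pathForm (y ^^^ 2 ^ C.vertex w) =
      C.pathForm x - C.pathForm y + (1 - 2 * bitc C.q x (C.vertex w)) *
        (bitc C.q x (C.vertex (w + 1)) - bitc C.q y (C.vertex (w + 1))) := by
  have hoff (z : ℕ) : ∀ β ≤ C.m - 1, β ≠ w →
      bitc C.q (z ^^^ 2 ^ C.vertex w) (C.vertex β) = bitc C.q z (C.vertex β) :=
    fun β hβ hne => bitc_xor_two_pow_of_ne (C.vertex_ne (by omega) (by omega) hne)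
  simp only [pathForm]
  rw [sum_mul_succ_sub_sum_mul_succ hkw (by omega) (hoff x) (hoff y)
    (fun β hβ => bitc_congr (hagree β hβ))]
  · rw [bitc_xor_two_pow_self]
    ring
  · rw [bitc_xor_two_pow_self, bitc_xor_two_pow_self, bitc_congr (hagree w le_rfl)]

theorem f_xor_sub_f_xor (hx : x < 2 ^ C.m) (hy : y < 2 ^ C.m) (hkw : C.k ≤ w) (hw : w + 1 < C.m)
    (hagree : ∀ β ≤ w, x.testBit (C.vertex β) = y.testBit (C.vertex β))
    (hne : x.testBit (C.vertex (w + 1)) ≠ y.testBit (C.vertex (w + 1))) :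
    C.f (x ^^^ 2 ^ C.vertex w) - C.f (y ^^^ 2 ^ C.vertex w) =
      C.f x - C.f y + halfPeriod C.q := by
  have hwm : w < C.m := by omega
  obtain ⟨A, hA, hf⟩ := C.exists_isBitAffine_f_eq x
  have hyx : ∀ β < C.k, y.testBit (C.vertex β) = x.testBit (C.vertex β) :=
    fun β hβ => (hagree β (by omega)).symm
  rw [hf x hx fun _ _ => rfl, hf y hy hyx,
    hf _ (C.xor_two_pow_vertex_lt hx hwm) fun β hβ =>
      C.testBit_vertex_xor_of_lt hwm (by omega) x,
    hf _ (C.xor_two_pow_vertex_lt hy hwm) fun β hβ =>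
      (C.testBit_vertex_xor_of_lt hwm (by omega) y).trans (hyx β hβ)]
  have hedge := halfPeriod_mul_bitc_sub_bitc C.hqeven hne
  linear_combination halfPeriod C.q * C.pathForm_xor_sub_pathForm_xor hkw hw hagree +
    hA (hagree w le_rfl) + hedge - bitc C.q x (C.vertex w) *
      (bitc C.q x (C.vertex (w + 1)) - bitc C.q y (C.vertex (w + 1))) *
        two_mul_halfPeriod C.hqeven

theorem maskedGBF_xor_sub_maskedGBF_xor (hx : x < 2 ^ C.m) (hy : y < 2 ^ C.m) (hkw : C.k ≤ w)
    (hw : w + 1 < C.m) (hagree : ∀ β ≤ w, x.testBit (C.vertex β) = y.testBit (C.vertex β))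
    (hne : x.testBit (C.vertex (w + 1)) ≠ y.testBit (C.vertex (w + 1))) (i j : ℕ) :
    C.maskedGBF i (x ^^^ 2 ^ C.vertex w) - C.maskedGBF j (y ^^^ 2 ^ C.vertex w) =
      C.maskedGBF i x - C.maskedGBF j y + halfPeriod C.q := by
  have hmask (t z : ℕ) : bitPairing C.q (C.k + 1) C.maskVertex t (z ^^^ 2 ^ C.vertex w) =
      bitPairing C.q (C.k + 1) C.maskVertex t z :=
    bitPairing_xor_two_pow_of_ne (fun β _ => C.maskVertex_ne_vertex hkw hw β) t z
  rw [maskedGBF, maskedGBF, hmask, hmask, maskedGBF, maskedGBF]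
  linear_combination C.f_xor_sub_f_xor hx hy hkw hw hagree hne

end Flip

/-- The position, in the enumeration `vertex`, just before the first one at which the bits of `x`
and `y` differ. Meaningful only if they differ somewhere, but not at position `0`. -/
noncomputable def pivot (x y : ℕ) : ℕ :=
  sInf {β | x.testBit (C.vertex β) ≠ y.testBit (C.vertex β)} - 1

theorem pivot_xor (x y z : ℕ) : C.pivot (x ^^^ z) (y ^^^ z) = C.pivot x y := by
  simp [pivot]

theorem pivot_spec {τ x : ℕ} (hτ : τ ≠ 0) (hx : x ∈ C.agreementSet τ) :
    C.k ≤ C.pivot x (x + τ) ∧ C.pivot x (x + τ) + 1 < C.m ∧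
      (∀ β ≤ C.pivot x (x + τ), x.testBit (C.vertex β) = (x + τ).testBit (C.vertex β)) ∧
      x.testBit (C.vertex (C.pivot x (x + τ) + 1)) ≠
        (x + τ).testBit (C.vertex (C.pivot x (x + τ) + 1)) := by
  obtain ⟨hlt, hagree⟩ := C.mem_agreementSet.1 hx
  set S := {β | x.testBit (C.vertex β) ≠ (x + τ).testBit (C.vertex β)} with hS
  obtain ⟨t, htm, ht⟩ := exists_lt_testBit_ne (by omega) hlt (show x ≠ x + τ by omega)
  obtain ⟨β, hβm, rfl⟩ := C.vertex_bijOn.surjOn htm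
  have hmem : sInf S ∈ S := Nat.sInf_mem ⟨β, ht⟩
  have hm : sInf S < C.m := (Nat.sInf_le ht).trans_lt hβm
  have hk : C.k < sInf S := by
    by_contra! hle
    exact hmem (hagree _ (by omega))
  have hsucc : C.pivot x (x + τ) + 1 = sInf S := by
    rw [pivot, ← hS]
    omega
  refine ⟨by omega, by omega, fun β' hβ' => ?_, hsucc ▸ hmem⟩
  exact not_not.1 (Nat.notMem_of_lt_sInf (by omega : β' < sInf S))

theorem xor_mem_agreementSet {τ x w : ℕ} (hw : w < C.m) (hx : x ∈ C.agreementSet τ)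
    (hadd : (x ^^^ 2 ^ C.vertex w) + τ = (x + τ) ^^^ 2 ^ C.vertex w) :
    x ^^^ 2 ^ C.vertex w ∈ C.agreementSet τ := by
  obtain ⟨hlt, hagree⟩ := C.mem_agreementSet.1 hx
  rw [mem_agreementSet, hadd]
  exact ⟨C.xor_two_pow_vertex_lt hlt hw, fun β hβ => by
    rw [Nat.testBit_xor, Nat.testBit_xor, hagree β hβ]⟩

theorem sum_agreementSet_eq_zero {τ : ℕ} (hτ : τ ≠ 0) (i j : ℕ) :
    ∑ x ∈ C.agreementSet τ, ZMod.stdAddChar (C.maskedGBF i x - C.maskedGBF j (x + τ)) = 0 := by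
  have hadd : ∀ x ∈ C.agreementSet τ, (x ^^^ 2 ^ C.vertex (C.pivot x (x + τ))) + τ =
      (x + τ) ^^^ 2 ^ C.vertex (C.pivot x (x + τ)) := fun x hx =>
    xor_two_pow_add ((C.pivot_spec hτ hx).2.2.1 _ le_rfl)
  refine sum_stdAddChar_eq_zero_of_xor_two_pow C.hqeven
    (fun x => C.vertex (C.pivot x (x + τ))) (fun x hx => ?_) (fun x hx => ?_) (fun x hx => ?_)
  · have hw := (C.pivot_spec hτ hx).2.1
    exact C.xor_mem_agreementSet (by omega) hx (hadd x hx)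
  · rw [hadd x hx, pivot_xor]
  · obtain ⟨hkw, hw, hagree, hne⟩ := C.pivot_spec hτ hx
    have hlt := (C.mem_agreementSet.1 hx).1
    rw [hadd x hx]
    exact C.maskedGBF_xor_sub_maskedGBF_xor (by omega) hlt hkw hw hagree hne i j

end ZCZSetup

/-- **Proof step of Theorem 1: CCC-sum evaluation.** For every fixed `0 ≤ t_1 ≤ 2^s − 1`,
all `0 ≤ i, j ≤ 2^{k+1} − 1` and all shifts `0 ≤ τ ≤ 2^m`, one has
`2·Σ_{ν=0}^{2^{k+1}−1} γ(s^{(t_1,i)}_ν, s^{(t_1,j)}_ν)(τ) = 2^{m+k+2}` if `τ = 0` and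
`i = j`, and `= 0` otherwise. -/
theorem ccc_sum_evaluation (C : ZCZSetup) (t1 : ℕ) (ht1 : t1 < 2 ^ C.s)
    (i j : ℕ) (hi : i < 2 ^ (C.k + 1)) (hj : j < 2 ^ (C.k + 1))
    (τ : ℕ) (hτ : τ ≤ 2 ^ C.m) :
    2 * (∑ ν ∈ Finset.range (2 ^ (C.k + 1)),
        accfN (2 ^ C.m) (C.Sseq t1 i ν) (C.Sseq t1 j ν) τ) =
      if τ = 0 ∧ i = j then ((2 : ℂ) ^ (C.m + C.k + 2)) else 0 := by
  rw [C.sum_accfN_Sseq]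
  rcases eq_or_ne τ 0 with rfl | hτ0
  · simp only [C.sum_agreementSet_zero hi hj, true_and, mul_ite, mul_zero]
    congr 1
    ring
  · rw [C.sum_agreementSet_eq_zero hτ0, mul_zero, mul_zero, if_neg fun h => hτ0 h.1]
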